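/- There exists a constant C > 0 such that for every positive integer N, every positive integer σ dividing N, and every function u that is four times continuously differentiable on a neighbourhood of [0,1]² and vanishes on the boundary of [0,1]², the two-scale interpolant satisfies |||Î_{N,N}u − I_{N,N}u||| ≤ C σ^{−3} ‖∂⁴u/∂x²∂y²‖_{0,Ω}. -/

import Mathlib

open MeasureTheory Finset

noncomputable section

/-- The hat function `ψ_i^N` on the uniform mesh of `[0,1]` with `N` intervals. -/
def hat (N i : ℕ) (x : ℝ) : ℝ :=
  if ((i : ℝ) - 1) / N ≤ x ∧ x ≤ (i : ℝ) / N then N * (x - ((i : ℝ) - 1) / N)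
  else if (i : ℝ) / N ≤ x ∧ x ≤ ((i : ℝ) + 1) / N then N * (((i : ℝ) + 1) / N - x)
  else 0

/-- The nodal piecewise bilinear interpolant `I_{Nx,Ny} u`. -/
def interp (Nx Ny : ℕ) (u : ℝ × ℝ → ℝ) : ℝ × ℝ → ℝ := fun p =>
  ∑ i ∈ range (Nx + 1), ∑ j ∈ range (Ny + 1),
    u ((i : ℝ) / Nx, (j : ℝ) / Ny) * hat Nx i p.1 * hat Ny j p.2

/-- The one-directional interpolant `I_{Nx,0} u` (interpolation in the `x`-direction only). -/
def interpX (Nx : ℕ) (u : ℝ × ℝ → ℝ) : ℝ × ℝ → ℝ := fun p =>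
  ∑ i ∈ range (Nx + 1), u ((i : ℝ) / Nx, p.2) * hat Nx i p.1

/-- The one-directional interpolant `I_{0,Ny} u` (interpolation in the `y`-direction only). -/
def interpY (Ny : ℕ) (u : ℝ × ℝ → ℝ) : ℝ × ℝ → ℝ := fun p =>
  ∑ j ∈ range (Ny + 1), u (p.1, (j : ℝ) / Ny) * hat Ny j p.2

/-- The two-scale interpolant `Î_{N,N} u = I_{N,σ}u + I_{σ,N}u − I_{σ,σ}u`. -/
def twoScale (N σ : ℕ) (u : ℝ × ℝ → ℝ) : ℝ × ℝ → ℝ := fun p =>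
  interp N σ u p + interp σ N u p - interp σ σ u p

/-- The multiscale interpolant
`I^{(k)}_{N,N} u = Σ_{i=0}^{k} I_{N/2^i, N/2^{k−i}}u − Σ_{i=1}^{k} I_{N/2^i, N/2^{k+1−i}}u`. -/
def msInterp (N k : ℕ) (u : ℝ × ℝ → ℝ) : ℝ × ℝ → ℝ := fun p =>
  ∑ i ∈ range (k + 1), interp (N / 2 ^ i) (N / 2 ^ (k - i)) u p
    - ∑ i ∈ Finset.Icc 1 k, interp (N / 2 ^ i) (N / 2 ^ (k + 1 - i)) u p

/-- The closed square `[0,1]²`. -/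
def unitSquare : Set (ℝ × ℝ) := Set.Icc (0 : ℝ) 1 ×ˢ Set.Icc (0 : ℝ) 1

/-- The open square `Ω = (0,1)²`. -/
def Omega2 : Set (ℝ × ℝ) := Set.Ioo (0 : ℝ) 1 ×ˢ Set.Ioo (0 : ℝ) 1

/-- Partial derivative in `x` (defined a.e. for Lipschitz functions; junk value `0` elsewhere). -/
def pderivX (v : ℝ × ℝ → ℝ) : ℝ × ℝ → ℝ := fun p => deriv (fun x => v (x, p.2)) p.1

/-- Partial derivative in `y` (defined a.e. for Lipschitz functions; junk value `0` elsewhere). -/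
def pderivY (v : ℝ × ℝ → ℝ) : ℝ × ℝ → ℝ := fun p => deriv (fun y => v (p.1, y)) p.2

/-- The `L²(Ω)` norm `‖v‖_{0,Ω}`. -/
def L2norm (v : ℝ × ℝ → ℝ) : ℝ := Real.sqrt (∫ p in Omega2, (v p) ^ 2)

/-- The energy norm `|||v||| = (∫_Ω |∇v|² + ∫_Ω v²)^{1/2}`, gradients taken a.e. -/
def energyNorm (v : ℝ × ℝ → ℝ) : ℝ :=
  Real.sqrt (∫ p in Omega2, ((pderivX v p) ^ 2 + (pderivY v p) ^ 2 + (v p) ^ 2))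

/-- `u` is four times continuously differentiable on a neighbourhood of `[0,1]²`. -/
def C4Near (u : ℝ × ℝ → ℝ) : Prop :=
  ∃ U : Set (ℝ × ℝ), IsOpen U ∧ unitSquare ⊆ U ∧ ContDiffOn ℝ 4 u U

/-- `u` vanishes on the boundary of `[0,1]²`. -/
def VanishOnBoundary (u : ℝ × ℝ → ℝ) : Prop :=
  ∀ p ∈ unitSquare, (p.1 = 0 ∨ p.1 = 1 ∨ p.2 = 0 ∨ p.2 = 1) → u p = 0

/-- The seminorm `|u|₂ = ‖u_xx‖_{0,Ω} + ‖u_xy‖_{0,Ω} + ‖u_yy‖_{0,Ω}`. -/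
def semi2 (u : ℝ × ℝ → ℝ) : ℝ :=
  L2norm (pderivX (pderivX u)) + L2norm (pderivX (pderivY u)) + L2norm (pderivY (pderivY u))

/-- The mixed fourth derivative `∂⁴u/∂x²∂y²`. -/
def uxxyy (u : ℝ × ℝ → ℝ) : ℝ × ℝ → ℝ := pderivX (pderivX (pderivY (pderivY u)))

/-- The bilinear form `B(v,w) = ∫_Ω ∇v·∇w + ∫_Ω v w`, gradients taken a.e. -/
def Bform (v w : ℝ × ℝ → ℝ) : ℝ :=
  ∫ p in Omega2, (pderivX v p * pderivX w p + pderivY v p * pderivY w p + v p * w p)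

/-- The piecewise linear interpolant of a function of one variable on the uniform mesh. -/
def linInterp (N : ℕ) (f : ℝ → ℝ) (x : ℝ) : ℝ :=
  ∑ i ∈ range (N + 1), f ((i : ℝ) / N) * hat N i x

/-- The difference between the fine and the coarse piecewise linear interpolants. -/
def linInterpDiff (N σ : ℕ) (f : ℝ → ℝ) (x : ℝ) : ℝ :=
  linInterp N f x - linInterp σ f x

/-- The open mesh interval `(i/N, (i+1)/N)`. -/
def meshCell (N i : ℕ) : Set ℝ := Set.Ioo ((i : ℝ) / N) (((i : ℝ) + 1) / N)

theorem interp_eq_linInterp (Nx Ny : ℕ) (u : ℝ × ℝ → ℝ) (p : ℝ × ℝ) :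
    interp Nx Ny u p = linInterp Nx (fun s => linInterp Ny (fun t => u (s, t)) p.2) p.1 := by
  simp only [interp, linInterp, Finset.sum_mul]
  refine Finset.sum_congr rfl fun i _ => Finset.sum_congr rfl fun j _ => ?_
  ring

theorem linInterp_sub (N : ℕ) (f g : ℝ → ℝ) (x : ℝ) :
    linInterp N (fun s => f s - g s) x = linInterp N f x - linInterp N g x := by
  simp only [linInterp, sub_mul, Finset.sum_sub_distrib]

theorem twoScale_sub_interp (N σ : ℕ) (u : ℝ × ℝ → ℝ) (p : ℝ × ℝ) :
    twoScale N σ u p - interp N N u p =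
      -linInterpDiff N σ (fun s => linInterpDiff N σ (fun t => u (s, t)) p.2) p.1 := by
  simp only [twoScale, interp_eq_linInterp, linInterpDiff, linInterp_sub]
  ring

theorem hat_of_mem_meshCell {N i j : ℕ} (hN : 0 < N) {x : ℝ} (hx : x ∈ meshCell N i) :
    hat N j x = if j = i then (i : ℝ) + 1 - N * x
      else if j = i + 1 then N * x - i else 0 := by
  have hN' : (0 : ℝ) < N := by exact_mod_cast hN
  obtain ⟨h1, h2⟩ := hx
  rw [div_lt_iff₀ hN'] at h1
  rw [lt_div_iff₀ hN'] at h2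
  simp only [hat, div_le_iff₀ hN', le_div_iff₀ hN']
  have e1 : (N : ℝ) * (x - ((j : ℝ) - 1) / N) = N * x - (j - 1) := by field_simp
  have e2 : (N : ℝ) * (((j : ℝ) + 1) / N - x) = j + 1 - N * x := by field_simp
  rw [e1, e2]
  rcases lt_trichotomy j i with h | rfl | h
  · have : (j : ℝ) + 1 ≤ i := by exact_mod_cast h
    rw [if_neg (by intro h; linarith [h.2]), if_neg (by intro h; linarith [h.2]),
      if_neg (by omega), if_neg (by omega)]
  · rw [if_neg (by intro h; linarith [h.2]), if_pos (by constructor <;> linarith), if_pos rfl]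
  · rcases Nat.eq_or_lt_of_le h with h' | h'
    · have : (j : ℝ) = i + 1 := by exact_mod_cast h'.symm
      rw [if_pos (by constructor <;> linarith), if_neg (by omega), if_pos (by omega)]
      linarith
    · have : (i : ℝ) + 2 ≤ j := by exact_mod_cast h'
      rw [if_neg (by intro h; linarith [h.1]), if_neg (by intro h; linarith [h.1]),
        if_neg (by omega), if_neg (by omega)]

theorem linInterp_of_mem_meshCell {N i : ℕ} (hi : i < N) (f : ℝ → ℝ) {x : ℝ}
    (hx : x ∈ meshCell N i) :
    linInterp N f x =
      f ((i : ℝ) / N) * (i + 1 - N * x) + f (((i : ℝ) + 1) / N) * (N * x - i) := by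
  have hN : 0 < N := by omega
  unfold linInterp
  rw [Finset.sum_eq_add_of_mem i (i + 1) (by simp; omega) (by simp; omega) (by omega)]
  · rw [hat_of_mem_meshCell hN hx, hat_of_mem_meshCell hN hx]
    simp
  · intro c _ hc
    rw [hat_of_mem_meshCell hN hx, if_neg hc.1, if_neg hc.2, mul_zero]

/-- The mesh points used by the fine and coarse interpolants on a pair of cells. -/
def cellNodes (N σ i k : ℕ) : Fin 4 → ℝ :=
  ![(i : ℝ) / N, ((i : ℝ) + 1) / N, (k : ℝ) / σ, ((k : ℝ) + 1) / σ]

/-- The weights of `linInterpDiff` at a point `x`, relative to `cellNodes`. -/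
def valueWeights (N σ i k : ℕ) (x : ℝ) : Fin 4 → ℝ :=
  ![(i : ℝ) + 1 - N * x, N * x - i, -((k : ℝ) + 1 - σ * x), -(σ * x - k)]

/-- The weights of the derivative of `linInterpDiff`, relative to `cellNodes`. -/
def slopeWeights (N σ : ℕ) : Fin 4 → ℝ := ![-(N : ℝ), N, σ, -(σ : ℝ)]

theorem linInterpDiff_eq_sum {N σ i k : ℕ} (hi : i < N) (hk : k < σ) (f : ℝ → ℝ) {x : ℝ}
    (hx : x ∈ meshCell N i) (hx' : x ∈ meshCell σ k) :
    linInterpDiff N σ f x = ∑ m, valueWeights N σ i k x m * f (cellNodes N σ i k m) := by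
  rw [linInterpDiff, linInterp_of_mem_meshCell hi f hx, linInterp_of_mem_meshCell hk f hx']
  simp [Fin.sum_univ_four, valueWeights, cellNodes]
  ring

theorem hasDerivAt_linInterpDiff {N σ i k : ℕ} (hi : i < N) (hk : k < σ) (f : ℝ → ℝ) {x : ℝ}
    (hx : x ∈ meshCell N i) (hx' : x ∈ meshCell σ k) :
    HasDerivAt (linInterpDiff N σ f)
      (∑ m, slopeWeights N σ m * f (cellNodes N σ i k m)) x := by
  have hev : linInterpDiff N σ f =ᶠ[nhds x]
      fun z => (f ((i : ℝ) / N) * (i + 1 - N * z) + f (((i : ℝ) + 1) / N) * (N * z - i)) -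
        (f ((k : ℝ) / σ) * (k + 1 - σ * z) + f (((k : ℝ) + 1) / σ) * (σ * z - k)) := by
    filter_upwards [isOpen_Ioo.mem_nhds hx, isOpen_Ioo.mem_nhds hx'] with z hz hz'
    rw [linInterpDiff, linInterp_of_mem_meshCell hi f hz, linInterp_of_mem_meshCell hk f hz']
  refine HasDerivAt.congr_of_eventuallyEq ?_ hev
  have hlin : ∀ A B c d e : ℝ,
      HasDerivAt (fun z : ℝ => A * (d - c * z) + B * (c * z - e)) (A * -c + B * c) x := by
    intro A B c d e
    have h := (hasDerivAt_id x).const_mul c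
    simp only [id, mul_one] at h
    exact ((h.const_sub d).const_mul A).add ((h.sub_const e).const_mul B)
  refine ((hlin _ _ _ _ _).sub (hlin _ _ _ _ _)).congr_deriv ?_
  simp [Fin.sum_univ_four, slopeWeights, cellNodes]
  ring

theorem abs_sub_le_integral_abs_deriv {a b : ℝ} {f₁ f₂ : ℝ → ℝ}
    (h₁ : ∀ x ∈ Set.Icc a b, HasDerivAt f₁ (f₂ x) x) (hc : ContinuousOn f₂ (Set.Icc a b))
    {x y : ℝ} (hx : x ∈ Set.Icc a b) (hy : y ∈ Set.Icc a b) :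
    |f₁ x - f₁ y| ≤ ∫ t in Set.Ioo a b, |f₂ t| := by
  have hsub : Set.uIcc y x ⊆ Set.Icc a b := Set.uIcc_subset_Icc hy hx
  rw [← intervalIntegral.integral_eq_sub_of_hasDerivAt (fun z hz => h₁ z (hsub hz))
    ((hc.mono hsub).intervalIntegrable), ← integral_Ioc_eq_integral_Ioo]
  refine (intervalIntegral.norm_integral_le_integral_norm_uIoc (f := f₂)).trans ?_
  refine setIntegral_mono_set ?_ (Filter.Eventually.of_forall fun _ => abs_nonneg _) ?_
  · exact (hc.abs.integrableOn_Icc).mono_set Set.Ioc_subset_Icc_self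
  · exact (Set.Ioc_subset_Ioc (le_min hy.1 hx.1) (max_le hy.2 hx.2)).eventuallyLE

theorem exists_slope_eq {a b : ℝ} {f f₁ : ℝ → ℝ}
    (h : ∀ x ∈ Set.Icc a b, HasDerivAt f (f₁ x) x) {c d : ℝ} (hac : a ≤ c) (hcd : c < d)
    (hdb : d ≤ b) : ∃ ξ ∈ Set.Icc a b, f d - f c = f₁ ξ * (d - c) := by
  have hsub : Set.Icc c d ⊆ Set.Icc a b := Set.Icc_subset_Icc hac hdb
  obtain ⟨ξ, hξ, e⟩ := exists_hasDerivAt_eq_slope f f₁ hcd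
    (fun z hz => (h z (hsub hz)).continuousAt.continuousWithinAt)
    (fun z hz => h z (hsub (Set.Ioo_subset_Icc_self hz)))
  refine ⟨ξ, hsub (Set.Ioo_subset_Icc_self hξ), ?_⟩
  rw [e, div_mul_cancel₀ _ (sub_pos.2 hcd).ne']

theorem abs_slopeWeights_sum_le {N σ i k : ℕ} (hN : 0 < N) (hσ : 0 < σ)
    (hl : (k : ℝ) / σ ≤ i / N) (hr : ((i : ℝ) + 1) / N ≤ (k + 1) / σ) {f f₁ f₂ : ℝ → ℝ}
    (h : ∀ x ∈ Set.Icc ((k : ℝ) / σ) ((k + 1) / σ), HasDerivAt f (f₁ x) x)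
    (h₁ : ∀ x ∈ Set.Icc ((k : ℝ) / σ) ((k + 1) / σ), HasDerivAt f₁ (f₂ x) x)
    (hc : ContinuousOn f₂ (Set.Icc ((k : ℝ) / σ) ((k + 1) / σ))) :
    |∑ m, slopeWeights N σ m * f (cellNodes N σ i k m)| ≤ ∫ t in meshCell σ k, |f₂ t| := by
  have hN' : (0 : ℝ) < N := by exact_mod_cast hN
  have hσ' : (0 : ℝ) < σ := by exact_mod_cast hσ
  obtain ⟨ξ, hξ, e⟩ := exists_slope_eq h hl
    (show (i : ℝ) / N < (i + 1) / N by gcongr; linarith) hr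
  obtain ⟨η, hη, e'⟩ := exists_slope_eq h le_rfl
    (show (k : ℝ) / σ < (k + 1) / σ by gcongr; linarith) le_rfl
  have hsum : ∑ m, slopeWeights N σ m * f (cellNodes N σ i k m) = f₁ ξ - f₁ η := by
    have : ∑ m, slopeWeights N σ m * f (cellNodes N σ i k m) =
        N * (f (((i : ℝ) + 1) / N) - f ((i : ℝ) / N)) -
          σ * (f (((k : ℝ) + 1) / σ) - f ((k : ℝ) / σ)) := by
      simp [Fin.sum_univ_four, slopeWeights, cellNodes]
      ring
    rw [this, e, e']
    field_simp
    ring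
  rw [hsum]
  exact abs_sub_le_integral_abs_deriv h₁ hc hξ hη

theorem abs_sub_chord_le {a b : ℝ} (hab : a < b) {f f₁ f₂ : ℝ → ℝ}
    (h : ∀ x ∈ Set.Icc a b, HasDerivAt f (f₁ x) x)
    (h₁ : ∀ x ∈ Set.Icc a b, HasDerivAt f₁ (f₂ x) x)
    (hc : ContinuousOn f₂ (Set.Icc a b)) {z : ℝ} (hz : z ∈ Set.Icc a b) :
    |f z - f a - (f b - f a) / (b - a) * (z - a)| ≤ (b - a) * ∫ t in Set.Ioo a b, |f₂ t| := by
  have hM : 0 ≤ ∫ t in Set.Ioo a b, |f₂ t| := integral_nonneg fun _ => abs_nonneg _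
  rcases hz.1.eq_or_lt with rfl | haz
  · simpa using mul_nonneg (sub_nonneg.2 hab.le) hM
  obtain ⟨ξ, hξ, e⟩ := exists_slope_eq h le_rfl haz hz.2
  obtain ⟨η, hη, e'⟩ := exists_slope_eq h le_rfl hab le_rfl
  rw [e, e', mul_div_cancel_right₀ _ (sub_pos.2 hab).ne', ← sub_mul, abs_mul,
    abs_of_pos (sub_pos.2 haz), mul_comm]
  exact mul_le_mul (by linarith [hz.2]) (abs_sub_le_integral_abs_deriv h₁ hc hξ hη)
    (abs_nonneg _) (sub_nonneg.2 hab.le)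

theorem abs_valueWeights_sum_le {N σ i k : ℕ} (hN : 0 < N) (hσ : 0 < σ)
    (hl : (k : ℝ) / σ ≤ i / N) (hr : ((i : ℝ) + 1) / N ≤ (k + 1) / σ) {x : ℝ}
    (hx : x ∈ meshCell N i) {f f₁ f₂ : ℝ → ℝ}
    (h : ∀ x ∈ Set.Icc ((k : ℝ) / σ) ((k + 1) / σ), HasDerivAt f (f₁ x) x)
    (h₁ : ∀ x ∈ Set.Icc ((k : ℝ) / σ) ((k + 1) / σ), HasDerivAt f₁ (f₂ x) x)
    (hc : ContinuousOn f₂ (Set.Icc ((k : ℝ) / σ) ((k + 1) / σ))) :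
    |∑ m, valueWeights N σ i k x m * f (cellNodes N σ i k m)| ≤
      1 / σ * ∫ t in meshCell σ k, |f₂ t| := by
  have hN' : (0 : ℝ) < N := by exact_mod_cast hN
  have hσ' : (0 : ℝ) < σ := by exact_mod_cast hσ
  have hcd : (i : ℝ) / N < (i + 1) / N := by gcongr; linarith
  have hab : (k : ℝ) / σ < (k + 1) / σ := by gcongr; linarith
  have hlen : ((k : ℝ) + 1) / σ - k / σ = 1 / σ := by ring
  have hleft := abs_sub_chord_le hab h h₁ hc ⟨hl, by linarith⟩
  have hright := abs_sub_chord_le hab h h₁ hc ⟨by linarith, hr⟩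
  rw [hlen] at hleft hright
  obtain ⟨hx1, hx2⟩ := hx
  rw [div_lt_iff₀ hN'] at hx1
  rw [lt_div_iff₀ hN'] at hx2
  have hsum : ∑ m, valueWeights N σ i k x m * f (cellNodes N σ i k m) =
      ((i : ℝ) + 1 - N * x) * (f (i / N) - f (k / σ) -
          (f ((k + 1) / σ) - f (k / σ)) / (1 / σ) * (i / N - k / σ)) +
        (N * x - i) * (f ((i + 1) / N) - f (k / σ) -
          (f ((k + 1) / σ) - f (k / σ)) / (1 / σ) * ((i + 1) / N - k / σ)) := by
    simp [Fin.sum_univ_four, valueWeights, cellNodes]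
    field_simp
    ring
  rw [hsum]
  refine (abs_add_le _ _).trans ?_
  rw [abs_mul, abs_mul, abs_of_pos (show (0 : ℝ) < i + 1 - N * x by linarith),
    abs_of_pos (show (0 : ℝ) < N * x - i by linarith)]
  refine (add_le_add (mul_le_mul_of_nonneg_left hleft (by linarith))
    (mul_le_mul_of_nonneg_left hright (by linarith))).trans_eq ?_
  unfold meshCell
  ring

theorem hasDerivAt_pderivX {U : Set (ℝ × ℝ)} (hU : IsOpen U) {n : WithTop ℕ∞} (hn : n ≠ 0)
    {u : ℝ × ℝ → ℝ} (hu : ContDiffOn ℝ n u U) {p : ℝ × ℝ} (hp : p ∈ U) :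
    HasDerivAt (fun x => u (x, p.2)) (pderivX u p) p.1 ∧
      pderivX u p = fderiv ℝ u p (1, 0) := by
  have hd : DifferentiableAt ℝ u p := (hu.contDiffAt (hU.mem_nhds hp)).differentiableAt hn
  have h : HasDerivAt (fun x => u (x, p.2)) (fderiv ℝ u p (1, 0)) p.1 :=
    HasFDerivAt.comp_hasDerivAt (f := fun x => (x, p.2)) p.1 hd.hasFDerivAt
      ((hasDerivAt_id p.1).prodMk (hasDerivAt_const p.1 p.2))
  have e : pderivX u p = fderiv ℝ u p (1, 0) := h.deriv
  exact ⟨e ▸ h, e⟩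

theorem hasDerivAt_pderivY {U : Set (ℝ × ℝ)} (hU : IsOpen U) {n : WithTop ℕ∞} (hn : n ≠ 0)
    {u : ℝ × ℝ → ℝ} (hu : ContDiffOn ℝ n u U) {p : ℝ × ℝ} (hp : p ∈ U) :
    HasDerivAt (fun y => u (p.1, y)) (pderivY u p) p.2 ∧
      pderivY u p = fderiv ℝ u p (0, 1) := by
  have hd : DifferentiableAt ℝ u p := (hu.contDiffAt (hU.mem_nhds hp)).differentiableAt hn
  have h : HasDerivAt (fun y => u (p.1, y)) (fderiv ℝ u p (0, 1)) p.2 :=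
    HasFDerivAt.comp_hasDerivAt (f := fun y => (p.1, y)) p.2 hd.hasFDerivAt
      ((hasDerivAt_const p.2 p.1).prodMk (hasDerivAt_id p.2))
  have e : pderivY u p = fderiv ℝ u p (0, 1) := h.deriv
  exact ⟨e ▸ h, e⟩

theorem ContDiffOn.pderivX {U : Set (ℝ × ℝ)} (hU : IsOpen U) {n : WithTop ℕ∞}
    {u : ℝ × ℝ → ℝ} (hu : ContDiffOn ℝ (n + 1) u U) : ContDiffOn ℝ n (pderivX u) U :=
  ((hu.fderiv_of_isOpen hU le_rfl).clm_apply contDiffOn_const).congr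
    fun _ hp => (hasDerivAt_pderivX hU (by simp) hu hp).2

theorem ContDiffOn.pderivY {U : Set (ℝ × ℝ)} (hU : IsOpen U) {n : WithTop ℕ∞}
    {u : ℝ × ℝ → ℝ} (hu : ContDiffOn ℝ (n + 1) u U) : ContDiffOn ℝ n (pderivY u) U :=
  ((hu.fderiv_of_isOpen hU le_rfl).clm_apply contDiffOn_const).congr
    fun _ hp => (hasDerivAt_pderivY hU (by simp) hu hp).2

/-- The functional `f ↦ ∑ m, α m * f (z m)` is bounded by `A` times the `L¹` norm of the second
derivative over `(a, b)`. -/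
def SecondDerivBound (a b A : ℝ) {ι : Type*} [Fintype ι] (α z : ι → ℝ) : Prop :=
  ∀ f f₁ f₂ : ℝ → ℝ, (∀ x ∈ Set.Icc a b, HasDerivAt f (f₁ x) x) →
    (∀ x ∈ Set.Icc a b, HasDerivAt f₁ (f₂ x) x) → ContinuousOn f₂ (Set.Icc a b) →
      |∑ m, α m * f (z m)| ≤ A * ∫ t in Set.Ioo a b, |f₂ t|

theorem continuousOn_uxxyy {U : Set (ℝ × ℝ)} (hU : IsOpen U) {u : ℝ × ℝ → ℝ}
    (hu : ContDiffOn ℝ 4 u U) : ContinuousOn (uxxyy u) U := by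
  have h3 : ContDiffOn ℝ 3 (pderivY u) U := ContDiffOn.pderivY hU (by norm_num; exact hu)
  have h2 : ContDiffOn ℝ 2 (pderivY (pderivY u)) U :=
    ContDiffOn.pderivY hU (by norm_num; exact h3)
  have h1 : ContDiffOn ℝ 1 (pderivX (pderivY (pderivY u))) U :=
    ContDiffOn.pderivX hU (by norm_num; exact h2)
  have h0 : ContDiffOn ℝ 0 (uxxyy u) U := ContDiffOn.pderivX hU (by norm_num; exact h1)
  exact h0.continuousOn

theorem SecondDerivBound.abs_tensor_sum_le {U : Set (ℝ × ℝ)} (hU : IsOpen U)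
    (hsub : unitSquare ⊆ U) {u : ℝ × ℝ → ℝ} (hu : ContDiffOn ℝ 4 u U)
    {ι κ : Type*} [Fintype ι] [Fintype κ] {α z : ι → ℝ} {β y : κ → ℝ}
    (hz : ∀ m, z m ∈ Set.Icc (0 : ℝ) 1) {a b A a' b' B : ℝ} (hB : 0 ≤ B)
    (hab : Set.Icc a b ⊆ Set.Icc 0 1) (hab' : Set.Icc a' b' ⊆ Set.Icc 0 1)
    (hα : SecondDerivBound a b A α z) (hβ : SecondDerivBound a' b' B β y) :
    |∑ m, α m * ∑ l, β l * u (z m, y l)| ≤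
      A * B * ∫ p in Set.Ioo a b ×ˢ Set.Ioo a' b', |uxxyy u p| := by
  have h3 : ContDiffOn ℝ 3 (pderivY u) U := ContDiffOn.pderivY hU (by norm_num; exact hu)
  have h2 : ContDiffOn ℝ 2 (pderivY (pderivY u)) U :=
    ContDiffOn.pderivY hU (by norm_num; exact h3)
  have h1 : ContDiffOn ℝ 1 (pderivX (pderivY (pderivY u))) U :=
    ContDiffOn.pderivX hU (by norm_num; exact h2)
  have hcont := continuousOn_uxxyy hU hu
  have hswap : ∑ m, α m * ∑ l, β l * u (z m, y l) = ∑ l, β l * ∑ m, α m * u (z m, y l) := by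
    simp only [Finset.mul_sum]
    rw [Finset.sum_comm]
    exact Finset.sum_congr rfl fun _ _ => Finset.sum_congr rfl fun _ _ => by ring
  have hmem : ∀ m, ∀ t ∈ Set.Icc a' b', (z m, t) ∈ U := fun m t ht =>
    hsub ⟨hz m, hab' ht⟩
  rw [hswap]
  refine (hβ (fun t => ∑ m, α m * u (z m, t)) (fun t => ∑ m, α m * pderivY u (z m, t))
    (fun t => ∑ m, α m * pderivY (pderivY u) (z m, t)) ?_ ?_ ?_).trans ?_
  · exact fun t ht => HasDerivAt.fun_sum fun m _ =>
      (hasDerivAt_pderivY hU (by simp) hu (hmem m t ht)).1.const_mul _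
  · exact fun t ht => HasDerivAt.fun_sum fun m _ =>
      (hasDerivAt_pderivY hU (by simp) h3 (hmem m t ht)).1.const_mul _
  · exact continuousOn_finsetSum _ fun m _ => continuousOn_const.mul
      (h2.continuousOn.comp (by fun_prop) (hmem m))
  have hint : Integrable (fun p => |uxxyy u p|)
      ((volume.restrict (Set.Ioo a b)).prod (volume.restrict (Set.Ioo a' b'))) := by
    rw [Measure.prod_restrict, ← Measure.volume_eq_prod]
    refine ((hcont.mono (fun p hp => hsub ⟨hab hp.1, hab' hp.2⟩)).abs.integrableOn_compact
      (isCompact_Icc.prod isCompact_Icc)).mono_set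
      (Set.prod_mono (Set.Ioo_subset_Icc_self (a := a) (b := b))
        (Set.Ioo_subset_Icc_self (a := a') (b := b')))
  have hmono : ∫ t in Set.Ioo a' b', |∑ m, α m * pderivY (pderivY u) (z m, t)| ≤
      ∫ t in Set.Ioo a' b', A * ∫ s in Set.Ioo a b, |uxxyy u (s, t)| := by
    refine integral_mono_of_nonneg (Filter.Eventually.of_forall fun _ => abs_nonneg _)
      (hint.integral_prod_right.const_mul A) ?_
    filter_upwards [ae_restrict_mem measurableSet_Ioo] with t ht
    have hmem' : ∀ s ∈ Set.Icc a b, (s, t) ∈ U := fun s hs =>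
      hsub ⟨hab hs, hab' (Set.Ioo_subset_Icc_self ht)⟩
    exact hα (fun s => pderivY (pderivY u) (s, t))
      (fun s => pderivX (pderivY (pderivY u)) (s, t)) (fun s => uxxyy u (s, t))
      (fun s hs => (hasDerivAt_pderivX hU (by simp) h2 (hmem' s hs)).1)
      (fun s hs => (hasDerivAt_pderivX hU (by simp) h1 (hmem' s hs)).1)
      (hcont.comp (by fun_prop) hmem')
  refine (mul_le_mul_of_nonneg_left hmono hB).trans_eq ?_
  rw [integral_const_mul, Measure.volume_eq_prod, ← Measure.prod_restrict,
    integral_prod_symm _ hint]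
  ring

theorem sq_setIntegral_abs_le {X : Type*} [MeasurableSpace X] {μ : Measure X} {s : Set X}
    {g : X → ℝ} (hs : 0 < μ.real s) (hg : IntegrableOn (fun x => |g x|) s μ)
    (hg2 : IntegrableOn (fun x => g x ^ 2) s μ) :
    (∫ x in s, |g x| ∂μ) ^ 2 ≤ μ.real s * ∫ x in s, g x ^ 2 ∂μ := by
  set m := ∫ x in s, |g x| ∂μ
  set v := μ.real s
  have hfin : IsFiniteMeasure (μ.restrict s) := ⟨by
    rw [Measure.restrict_apply_univ]
    exact (ENNReal.toReal_pos_iff.1 hs).2⟩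
  have hnn : 0 ≤ ∫ x in s, (|g x| - m / v) ^ 2 ∂μ := integral_nonneg fun _ => sq_nonneg _
  have hexp : ∫ x in s, (|g x| - m / v) ^ 2 ∂μ =
      (∫ x in s, g x ^ 2 ∂μ) - 2 * (m / v) * m + v * (m / v) ^ 2 := by
    have : ∀ x, (|g x| - m / v) ^ 2 = g x ^ 2 - 2 * (m / v) * |g x| + (m / v) ^ 2 := fun x => by
      rw [sub_sq, sq_abs]; ring
    simp only [this]
    have hsub : Integrable (fun x => g x ^ 2 - 2 * (m / v) * |g x|) (μ.restrict s) :=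
      hg2.sub (hg.const_mul _)
    rw [integral_add hsub (integrable_const _), integral_sub hg2 (hg.const_mul _),
      integral_const_mul, setIntegral_const, smul_eq_mul]
  rw [hexp] at hnn
  have : v * ((∫ x in s, g x ^ 2 ∂μ) - 2 * (m / v) * m + v * (m / v) ^ 2) =
      v * (∫ x in s, g x ^ 2 ∂μ) - m ^ 2 := by
    field_simp; ring
  nlinarith [mul_nonneg hs.le hnn]

theorem exists_coarse_cell {N σ i : ℕ} (hσ : 0 < σ) (hdvd : σ ∣ N) (hi : i < N) :
    ∃ k < σ, (k : ℝ) / σ ≤ i / N ∧ ((i : ℝ) + 1) / N ≤ (k + 1) / σ := by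
  obtain ⟨m, rfl⟩ := hdvd
  have hm : 0 < m := Nat.pos_of_ne_zero (by rintro rfl; simp at hi)
  have hσ' : (0 : ℝ) < σ := by exact_mod_cast hσ
  have hm' : (0 : ℝ) < m := by exact_mod_cast hm
  have h1 : ((i / m * m : ℕ) : ℝ) ≤ i := by exact_mod_cast Nat.div_mul_le_self i m
  have h2 : ((i + 1 : ℕ) : ℝ) ≤ ((i / m + 1) * m : ℕ) := by
    exact_mod_cast Nat.lt_mul_of_div_lt (Nat.lt_succ_self _) hm
  refine ⟨i / m, Nat.div_lt_of_lt_mul (by rwa [mul_comm]), ?_, ?_⟩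
  · push_cast at h1 ⊢
    rw [div_le_div_iff₀ hσ' (by positivity)]
    nlinarith
  · push_cast at h2 ⊢
    rw [div_le_div_iff₀ (by positivity) hσ']
    nlinarith

theorem Icc_div_subset_unit {N i : ℕ} (hi : i < N) :
    Set.Icc ((i : ℝ) / N) ((i + 1) / N) ⊆ Set.Icc 0 1 := by
  have hN : (0 : ℝ) < N := by exact_mod_cast (show 0 < N by omega)
  refine Set.Icc_subset_Icc (by positivity) ?_
  rw [div_le_one hN]
  exact_mod_cast hi

theorem volume_real_meshCell_prod {σ : ℕ} (hσ : 0 < σ) (k l : ℕ) :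
    volume.real (meshCell σ k ×ˢ meshCell σ l) = 1 / (σ : ℝ) ^ 2 := by
  have hσ' : (0 : ℝ) < σ := by exact_mod_cast hσ
  have hcell : ∀ k : ℕ, volume.real (meshCell σ k) = 1 / σ := fun k => by
    rw [meshCell, Real.volume_real_Ioo_of_le (by gcongr; linarith)]
    ring
  rw [Measure.volume_eq_prod, measureReal_prod_prod, hcell, hcell]
  ring

theorem meshCell_prod_subset_Omega2 {σ k l : ℕ} (hk : k < σ) (hl : l < σ) :
    meshCell σ k ×ˢ meshCell σ l ⊆ Omega2 := by
  have hcell : ∀ k < σ, meshCell σ k ⊆ Set.Ioo 0 1 := fun k hk => by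
    have hσ : (0 : ℝ) < σ := by exact_mod_cast (show 0 < σ by omega)
    refine Set.Ioo_subset_Ioo (by positivity) ?_
    rw [div_le_one hσ]
    exact_mod_cast hk
  exact Set.prod_mono (hcell k hk) (hcell l hl)

theorem pairwise_disjoint_meshCell (σ : ℕ) : Pairwise (Function.onFun Disjoint (meshCell σ)) := by
  have key : ∀ k l : ℕ, k < l → Disjoint (meshCell σ k) (meshCell σ l) := fun k l h => by
    refine Set.disjoint_left.2 fun x hx hx' => ?_
    have : ((k : ℝ) + 1) / σ ≤ l / σ := by
      gcongr
      exact_mod_cast h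
    linarith [hx.2, hx'.1]
  intro k l h
  rcases h.lt_or_gt with h | h
  · exact key k l h
  · exact (key l k h).symm

theorem integrableOn_abs_uxxyy_and_sq {U : Set (ℝ × ℝ)} (hU : IsOpen U)
    (hsub : unitSquare ⊆ U) {u : ℝ × ℝ → ℝ} (hu : ContDiffOn ℝ 4 u U) :
    IntegrableOn (fun p => |uxxyy u p|) Omega2 ∧ IntegrableOn (fun p => uxxyy u p ^ 2) Omega2 := by
  have hcont := (continuousOn_uxxyy hU hu).mono hsub
  have hK : IsCompact unitSquare := isCompact_Icc.prod isCompact_Icc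
  have hle : Omega2 ⊆ unitSquare :=
    Set.prod_mono Set.Ioo_subset_Icc_self Set.Ioo_subset_Icc_self
  exact ⟨(hcont.abs.integrableOn_compact hK).mono_set hle,
    ((hcont.pow 2).integrableOn_compact hK).mono_set hle⟩

theorem energy_density_le {N σ : ℕ} (hσ : 0 < σ) {U : Set (ℝ × ℝ)}
    (hU : IsOpen U) (hsub : unitSquare ⊆ U) {u : ℝ × ℝ → ℝ} (hu : ContDiffOn ℝ 4 u U)
    {i j k l : ℕ} (hi : i < N) (hj : j < N) (hk : k < σ) (hl : l < σ)
    (hik : (k : ℝ) / σ ≤ i / N) (hik' : ((i : ℝ) + 1) / N ≤ (k + 1) / σ)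
    (hjl : (l : ℝ) / σ ≤ j / N) (hjl' : ((j : ℝ) + 1) / N ≤ (l + 1) / σ)
    {p : ℝ × ℝ} (hp : p ∈ meshCell N i ×ˢ meshCell N j) :
    (pderivX (fun p => twoScale N σ u p - interp N N u p) p) ^ 2 +
        (pderivY (fun p => twoScale N σ u p - interp N N u p) p) ^ 2 +
        (twoScale N σ u p - interp N N u p) ^ 2 ≤
      3 / (σ : ℝ) ^ 4 * ∫ q in meshCell σ k ×ˢ meshCell σ l, uxxyy u q ^ 2 := by
  have hN : 0 < N := by omega
  have hσ' : (1 : ℝ) ≤ σ := by exact_mod_cast hσ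
  obtain ⟨x, y⟩ := p
  obtain ⟨hx, hy⟩ := hp
  simp only at hx hy
  have hx' : x ∈ meshCell σ k := ⟨hik.trans_lt hx.1, hx.2.trans_le hik'⟩
  have hy' : y ∈ meshCell σ l := ⟨hjl.trans_lt hy.1, hy.2.trans_le hjl'⟩
  have hnodes : ∀ m, cellNodes N σ i k m ∈ Set.Icc (0 : ℝ) 1 := by
    have h1 : (i : ℝ) / N ≤ (i + 1) / N := (hx.1.trans hx.2).le
    have h2 : (k : ℝ) / σ ≤ (k + 1) / σ := (hx'.1.trans hx'.2).le
    have hf := Icc_div_subset_unit hi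
    have hc := Icc_div_subset_unit hk
    intro m
    fin_cases m
    exacts [hf ⟨le_rfl, h1⟩, hf ⟨h1, le_rfl⟩, hc ⟨le_rfl, h2⟩, hc ⟨h2, le_rfl⟩]
  have slopeX : SecondDerivBound ((k : ℝ) / σ) ((k + 1) / σ) 1 (slopeWeights N σ)
      (cellNodes N σ i k) := fun f f₁ f₂ h h₁ hc => by
    rw [one_mul]
    exact abs_slopeWeights_sum_le hN hσ hik hik' h h₁ hc
  have slopeY : SecondDerivBound ((l : ℝ) / σ) ((l + 1) / σ) 1 (slopeWeights N σ)
      (cellNodes N σ j l) := fun f f₁ f₂ h h₁ hc => by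
    rw [one_mul]
    exact abs_slopeWeights_sum_le hN hσ hjl hjl' h h₁ hc
  have valueX : SecondDerivBound ((k : ℝ) / σ) ((k + 1) / σ) (1 / σ) (valueWeights N σ i k x)
      (cellNodes N σ i k) := fun f f₁ f₂ h h₁ hc =>
    abs_valueWeights_sum_le hN hσ hik hik' hx h h₁ hc
  have valueY : SecondDerivBound ((l : ℝ) / σ) ((l + 1) / σ) (1 / σ) (valueWeights N σ j l y)
      (cellNodes N σ j l) := fun f f₁ f₂ h h₁ hc =>
    abs_valueWeights_sum_le hN hσ hjl hjl' hy h h₁ hc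
  set M := ∫ q in meshCell σ k ×ˢ meshCell σ l, |uxxyy u q| with hM
  have hM0 : 0 ≤ M := integral_nonneg fun _ => abs_nonneg _
  have hdX : |pderivX (fun p => twoScale N σ u p - interp N N u p) (x, y)| ≤ 1 / σ * M := by
    simp only [pderivX, twoScale_sub_interp]
    rw [(hasDerivAt_linInterpDiff hi hk _ hx hx').fun_neg.deriv, abs_neg]
    simp only [linInterpDiff_eq_sum hj hl _ hy hy']
    simpa [hM, meshCell] using SecondDerivBound.abs_tensor_sum_le hU hsub hu hnodes (by positivity)
      (Icc_div_subset_unit hk) (Icc_div_subset_unit hl) slopeX valueY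
  have hdY : |pderivY (fun p => twoScale N σ u p - interp N N u p) (x, y)| ≤ 1 / σ * M := by
    simp only [pderivY, twoScale_sub_interp, linInterpDiff_eq_sum hi hk _ hx hx']
    have hder := HasDerivAt.fun_sum (u := Finset.univ) fun m (_ : m ∈ Finset.univ) =>
      (hasDerivAt_linInterpDiff hj hl (fun t => u (cellNodes N σ i k m, t)) hy hy').const_mul
        (valueWeights N σ i k x m)
    rw [hder.fun_neg.deriv, abs_neg]
    simpa [hM, meshCell] using SecondDerivBound.abs_tensor_sum_le hU hsub hu hnodes zero_le_one
      (Icc_div_subset_unit hk) (Icc_div_subset_unit hl) valueX slopeY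
  have hval : |twoScale N σ u (x, y) - interp N N u (x, y)| ≤ 1 / σ * M := by
    rw [twoScale_sub_interp, abs_neg, linInterpDiff_eq_sum hi hk _ hx hx']
    simp only [linInterpDiff_eq_sum hj hl _ hy hy']
    refine (SecondDerivBound.abs_tensor_sum_le hU hsub hu hnodes (by positivity)
      (Icc_div_subset_unit hk) (Icc_div_subset_unit hl) valueX valueY).trans ?_
    refine mul_le_mul_of_nonneg_right (mul_le_of_le_one_right (by positivity) ?_) hM0
    exact div_le_one_of_le₀ hσ' (by positivity)
  obtain ⟨hint, hint2⟩ := integrableOn_abs_uxxyy_and_sq hU hsub hu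
  have hsubset := meshCell_prod_subset_Omega2 hk hl
  have hvol := volume_real_meshCell_prod hσ k l
  have hCS := sq_setIntegral_abs_le (by rw [hvol]; positivity) (hint.mono_set hsubset)
    (hint2.mono_set hsubset)
  rw [hvol, ← hM] at hCS
  have hsq : ∀ v : ℝ, |v| ≤ 1 / σ * M → v ^ 2 ≤
      1 / (σ : ℝ) ^ 4 * ∫ q in meshCell σ k ×ˢ meshCell σ l, uxxyy u q ^ 2 := fun v hv => by
    calc v ^ 2 ≤ (1 / σ * M) ^ 2 := sq_le_sq' (abs_le.1 hv).1 (abs_le.1 hv).2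
      _ = 1 / (σ : ℝ) ^ 2 * M ^ 2 := by ring
      _ ≤ 1 / (σ : ℝ) ^ 2 * (1 / (σ : ℝ) ^ 2 *
            ∫ q in meshCell σ k ×ˢ meshCell σ l, uxxyy u q ^ 2) := by gcongr
      _ = _ := by ring
  refine (add_le_add (add_le_add (hsq _ hdX) (hsq _ hdY)) (hsq _ hval)).trans_eq ?_
  ring

theorem ae_exists_mem_meshCell {N : ℕ} (hN : 0 < N) :
    ∀ᵐ x : ℝ, x ∈ Set.Ioo (0 : ℝ) 1 → ∃ i < N, x ∈ meshCell N i := by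
  have hN' : (0 : ℝ) < N := by exact_mod_cast hN
  filter_upwards [(Set.countable_range fun i : ℕ => (i : ℝ) / N).ae_notMem volume] with x hx h01
  have hpos : 0 ≤ x * N := mul_nonneg h01.1.le hN'.le
  refine ⟨⌊x * N⌋₊, ?_, lt_of_le_of_ne ?_ fun h => hx ⟨_, h⟩, ?_⟩
  · rw [Nat.floor_lt hpos]
    nlinarith [h01.2]
  · rw [div_le_iff₀ hN']
    exact Nat.floor_le hpos
  · rw [lt_div_iff₀ hN']
    exact Nat.lt_floor_add_one _

theorem integral_energy_density_le {N σ : ℕ} (hN : 0 < N) (hσ : 0 < σ) (hdvd : σ ∣ N)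
    {u : ℝ × ℝ → ℝ} (hu : C4Near u) :
    ∫ p in Omega2, ((pderivX (fun p => twoScale N σ u p - interp N N u p) p) ^ 2 +
        (pderivY (fun p => twoScale N σ u p - interp N N u p) p) ^ 2 +
        (twoScale N σ u p - interp N N u p) ^ 2) ≤
      3 / (σ : ℝ) ^ 6 * ∫ p in Omega2, uxxyy u p ^ 2 := by
  obtain ⟨U, hU, hsub, hu⟩ := hu
  obtain ⟨-, hint2⟩ := integrableOn_abs_uxxyy_and_sq hU hsub hu
  let cell : ℕ × ℕ → Set (ℝ × ℝ) := fun q => meshCell σ q.1 ×ˢ meshCell σ q.2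
  let I : ℕ × ℕ → ℝ := fun q => ∫ p in cell q, uxxyy u p ^ 2
  have hI : ∀ q, 0 ≤ I q := fun q => integral_nonneg fun _ => sq_nonneg _
  have hmeas : ∀ q, MeasurableSet (cell q) := fun q => measurableSet_Ioo.prod measurableSet_Ioo
  have hcell : ∀ q ∈ range σ ×ˢ range σ, cell q ⊆ Omega2 := fun q hq => by
    rw [Finset.mem_product, Finset.mem_range, Finset.mem_range] at hq
    exact meshCell_prod_subset_Omega2 hq.1 hq.2
  have hOmega : MeasurableSet Omega2 := measurableSet_Ioo.prod measurableSet_Ioo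
  have hfin : volume Omega2 ≠ ⊤ := ne_top_of_le_ne_top
    (isCompact_Icc.prod isCompact_Icc : IsCompact unitSquare).measure_ne_top
    (measure_mono (Set.prod_mono Set.Ioo_subset_Icc_self Set.Ioo_subset_Icc_self))
  have hbound_int : ∀ q ∈ range σ ×ˢ range σ,
      IntegrableOn ((cell q).indicator fun _ => 3 / (σ : ℝ) ^ 4 * I q) Omega2 := fun q _ =>
    (integrableOn_const hfin).indicator (hmeas q)
  calc _ ≤ ∫ p in Omega2, ∑ q ∈ range σ ×ˢ range σ,
        (cell q).indicator (fun _ => 3 / (σ : ℝ) ^ 4 * I q) p := by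
        refine integral_mono_of_nonneg (Filter.Eventually.of_forall fun _ => by positivity)
          (integrable_finsetSum _ hbound_int) ?_
        have hcells := ae_exists_mem_meshCell hN
        have hfst : ∀ᵐ p : ℝ × ℝ, p.1 ∈ Set.Ioo (0 : ℝ) 1 → ∃ i < N, p.1 ∈ meshCell N i :=
          Measure.quasiMeasurePreserving_fst.ae hcells
        have hsnd : ∀ᵐ p : ℝ × ℝ, p.2 ∈ Set.Ioo (0 : ℝ) 1 → ∃ i < N, p.2 ∈ meshCell N i :=
          Measure.quasiMeasurePreserving_snd.ae hcells
        filter_upwards [ae_restrict_of_ae hfst, ae_restrict_of_ae hsnd,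
          ae_restrict_mem hOmega] with p hp1 hp2 hp
        obtain ⟨i, hi, hpi⟩ := hp1 hp.1
        obtain ⟨j, hj, hpj⟩ := hp2 hp.2
        obtain ⟨k, hk, hik, hik'⟩ := exists_coarse_cell hσ hdvd hi
        obtain ⟨l, hl, hjl, hjl'⟩ := exists_coarse_cell hσ hdvd hj
        have hmem : p ∈ cell (k, l) :=
          ⟨⟨hik.trans_lt hpi.1, hpi.2.trans_le hik'⟩, ⟨hjl.trans_lt hpj.1, hpj.2.trans_le hjl'⟩⟩
        refine (energy_density_le hσ hU hsub hu hi hj hk hl hik hik' hjl hjl' ⟨hpi, hpj⟩).trans ?_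
        refine Eq.trans_le ?_ (Finset.single_le_sum
          (f := fun q => (cell q).indicator (fun _ => 3 / (σ : ℝ) ^ 4 * I q) p)
          (fun q _ => Set.indicator_nonneg (fun _ _ => mul_nonneg (by positivity) (hI q)) p)
          (show (k, l) ∈ range σ ×ˢ range σ by simp [hk, hl]))
        simp only [Set.indicator_of_mem hmem]
        rfl
    _ = 3 / (σ : ℝ) ^ 6 * ∑ q ∈ range σ ×ˢ range σ, I q := by
        rw [integral_finsetSum _ hbound_int, Finset.mul_sum]
        refine Finset.sum_congr rfl fun q hq => ?_
        rw [setIntegral_indicator (hmeas q), Set.inter_eq_self_of_subset_right (hcell q hq),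
          setIntegral_const, volume_real_meshCell_prod hσ, smul_eq_mul]
        ring
    _ ≤ 3 / (σ : ℝ) ^ 6 * ∫ p in Omega2, uxxyy u p ^ 2 := by
        refine mul_le_mul_of_nonneg_left ?_ (by positivity)
        have hdisj : Set.Pairwise (↑(range σ ×ˢ range σ)) (Function.onFun Disjoint cell) := by
          intro q _ q' _ hne
          refine Set.disjoint_prod.2 ?_
          by_cases h : q.1 = q'.1
          · exact Or.inr (pairwise_disjoint_meshCell σ fun h' => hne (Prod.ext h h'))
          · exact Or.inl (pairwise_disjoint_meshCell σ h)
        rw [← integral_biUnion_finset _ (fun q _ => hmeas q) hdisj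
          fun q hq => hint2.mono_set (hcell q hq)]
        exact setIntegral_mono_set hint2 (Filter.Eventually.of_forall fun _ => sq_nonneg _)
          (Set.iUnion₂_subset hcell).eventuallyLE

/-- Energy-norm bound for the difference between the two-scale interpolant and the full
bilinear interpolant: `|||Î_{N,N}u − I_{N,N}u||| ≤ C σ⁻³ ‖∂⁴u/∂x²∂y²‖_{0,Ω}`. -/
theorem two_scale_vs_full_interpolant_energy_bound :
    ∃ C : ℝ, 0 < C ∧ ∀ (N σ : ℕ), 0 < N → 0 < σ → σ ∣ N →
      ∀ u : ℝ × ℝ → ℝ, C4Near u → VanishOnBoundary u →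
        energyNorm (fun p => twoScale N σ u p - interp N N u p) ≤
          C / (σ : ℝ) ^ 3 * L2norm (uxxyy u) := by
  refine ⟨√3, by positivity, fun N σ hN hσ hdvd u hu _ => ?_⟩
  unfold energyNorm L2norm
  refine (Real.sqrt_le_sqrt (integral_energy_density_le hN hσ hdvd hu)).trans_eq ?_
  rw [Real.sqrt_mul (by positivity), Real.sqrt_div (by norm_num),
    show (σ : ℝ) ^ 6 = (σ ^ 3) ^ 2 by ring, Real.sqrt_sq (by positivity)]
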